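/- arXiv:2312.01782 — 2 statements merged into one kernel-verified Lean document; each statement's English description precedes it below -/
import Mathlib

section
/- Let Q : ℝ → Matrix (Fin n) (Fin n) ℝ be a differentiable family of invertible matrices, D : ℝ → Matrix (Fin n) (Fin n) ℝ a differentiable family of invertible diagonal matrices, and M(t) := Q(t)⁻¹ · D(t) · Q(t). Then for every t, tr(M'(t) · M(t)⁻¹) = tr(D'(t) · D(t)⁻¹). -/
open Matrix

/-- Entrywise derivative of a matrix family. -/
noncomputable def entryDeriv {n : ℕ} (A : ℝ → Matrix (Fin n) (Fin n) ℝ) (t : ℝ) :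
    Matrix (Fin n) (Fin n) ℝ := Matrix.of fun i j => deriv (fun s => A s i j) t

lemma entryDeriv_mul {n : ℕ} (A B : ℝ → Matrix (Fin n) (Fin n) ℝ) (t : ℝ)
    (hA : ∀ i j, Differentiable ℝ fun t => A t i j)
    (hB : ∀ i j, Differentiable ℝ fun t => B t i j) :
    entryDeriv (fun s => A s * B s) t = entryDeriv A t * B t + A t * entryDeriv B t := by
  ext i j
  simp only [entryDeriv, Matrix.of_apply, Matrix.add_apply, Matrix.mul_apply]
  rw [← Finset.sum_add_distrib]
  refine HasDerivAt.deriv (HasDerivAt.fun_sum fun k _ => ?_)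
  exact (hA i k t).hasDerivAt.mul (hB k j t).hasDerivAt

lemma entry_diff_mul {n : ℕ} (A B : ℝ → Matrix (Fin n) (Fin n) ℝ)
    (hA : ∀ i j, Differentiable ℝ fun t => A t i j)
    (hB : ∀ i j, Differentiable ℝ fun t => B t i j) (i j : Fin n) :
    Differentiable ℝ fun t => (A t * B t) i j := by
  simp only [Matrix.mul_apply]
  exact Differentiable.fun_sum fun k _ => (hA i k).mul (hB k j)

lemma diff_det {n : ℕ} (A : ℝ → Matrix (Fin n) (Fin n) ℝ)
    (hA : ∀ i j, Differentiable ℝ fun t => A t i j) :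
    Differentiable ℝ fun t => (A t).det := by
  simp only [Matrix.det_apply']
  refine Differentiable.fun_sum fun k _ => Differentiable.const_mul ?_ _
  exact Differentiable.fun_finsetProd fun i _ => hA _ _

lemma entry_diff_inv {n : ℕ} (A : ℝ → Matrix (Fin n) (Fin n) ℝ)
    (hA : ∀ i j, Differentiable ℝ fun t => A t i j) (hu : ∀ t, IsUnit (A t)) (i j : Fin n) :
    Differentiable ℝ fun t => (A t)⁻¹ i j := by
  simp only [Matrix.inv_def, Matrix.smul_apply, Ring.inverse_eq_inv', smul_eq_mul]
  refine Differentiable.mul (Differentiable.inv (diff_det A hA) fun t => ?_) ?_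
  · exact ((Matrix.isUnit_iff_isUnit_det _).1 (hu t)).ne_zero
  · simp only [Matrix.adjugate_apply]
    refine diff_det _ fun a b => ?_
    by_cases h : a = j
    · subst h; simp
    · simpa [Matrix.updateRow_ne h] using hA a b

/-- For a differentiable family of invertible matrices `Q(t)`, a differentiable family of
invertible diagonal matrices `D(t)` and `M(t) = Q(t)⁻¹ D(t) Q(t)`,
`tr(M'(t) M(t)⁻¹) = tr(D'(t) D(t)⁻¹)`. -/
theorem trace_deriv_conj_diagonal
    (n : ℕ) (Q : ℝ → Matrix (Fin n) (Fin n) ℝ)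
    (hQdiff : ∀ i j, Differentiable ℝ fun t => Q t i j)
    (hQinv : ∀ t, IsUnit (Q t))
    (d : Fin n → ℝ → ℝ)
    (hddiff : ∀ i, Differentiable ℝ (d i))
    (hdinv : ∀ (t : ℝ) (i : Fin n), d i t ≠ 0)
    (D : ℝ → Matrix (Fin n) (Fin n) ℝ)
    (hD : ∀ t, D t = Matrix.diagonal fun i => d i t)
    (M : ℝ → Matrix (Fin n) (Fin n) ℝ)
    (hM : ∀ t, M t = (Q t)⁻¹ * D t * Q t)
    (t : ℝ) :
    Matrix.trace ((Matrix.of fun i j => deriv (fun s => M s i j) t) * (M t)⁻¹)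
      = Matrix.trace ((Matrix.of fun i j => deriv (fun s => D s i j) t) * (D t)⁻¹) := by
  have hDdiff : ∀ i j, Differentiable ℝ fun t => D t i j := by
    intro i j
    simp only [hD]
    by_cases h : i = j
    · subst h; simpa using hddiff i
    · simp [h]
  have hMdiff : ∀ i j, Differentiable ℝ fun t => M t i j := by
    simp only [hM]
    exact entry_diff_mul _ _ (entry_diff_mul _ _ (entry_diff_inv Q hQdiff hQinv) hDdiff) hQdiff
  have hdet : ∀ t, IsUnit (Q t).det := fun t => (Matrix.isUnit_iff_isUnit_det _).1 (hQinv t)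
  have hDdet : IsUnit (D t).det := by
    rw [hD, Matrix.det_diagonal, isUnit_iff_ne_zero]
    exact Finset.prod_ne_zero_iff.2 fun i _ => hdinv t i
  have hQM : (fun s => Q s * M s) = fun s => D s * Q s := by
    funext s
    rw [hM, Matrix.mul_assoc, Matrix.mul_nonsing_inv_cancel_left _ _ (hdet s)]
  have key := entryDeriv_mul Q M t hQdiff hMdiff
  rw [hQM, entryDeriv_mul D Q t hDdiff hQdiff] at key
  change Matrix.trace (entryDeriv M t * (M t)⁻¹) = Matrix.trace (entryDeriv D t * (D t)⁻¹)
  have hMi : (M t)⁻¹ = (Q t)⁻¹ * (D t)⁻¹ * Q t := by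
    rw [hM, Matrix.mul_inv_rev, Matrix.mul_inv_rev, Matrix.nonsing_inv_nonsing_inv _ (hdet t),
      Matrix.mul_assoc]
  have e1 : Q t * (Q t)⁻¹ = 1 := Matrix.mul_nonsing_inv _ (hdet t)
  have e3 : D t * (D t)⁻¹ = 1 := Matrix.mul_nonsing_inv _ hDdet
  have e4 : (D t)⁻¹ * D t = 1 := Matrix.nonsing_inv_mul _ hDdet
  rw [hM t] at key
  rw [hMi]
  generalize entryDeriv M t = M' at *
  generalize entryDeriv D t = D' at *
  generalize entryDeriv Q t = Q' at *
  generalize (Q t)⁻¹ = P at *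
  generalize (D t)⁻¹ = E at *
  generalize Q t = R at *
  generalize D t = F at *
  have h1 : R * M' = D' * R + F * Q' - Q' * (P * F * R) := by rw [key]; abel
  have h2 : Matrix.trace (M' * (P * E * R)) = Matrix.trace (R * M' * (P * E)) := by
    rw [← Matrix.mul_assoc, Matrix.trace_mul_comm, Matrix.mul_assoc]
  have h3 : (D' * R + F * Q' - Q' * (P * F * R)) * (P * E)
      = D' * E + F * (Q' * P * E) - Q' * P := by
    have a1 : D' * R * (P * E) = D' * (R * P) * E := by simp only [Matrix.mul_assoc]
    have a2 : Q' * (P * F * R) * (P * E) = Q' * P * (F * (R * P) * E) := by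
      simp only [Matrix.mul_assoc]
    rw [sub_mul, add_mul, a1, a2, e1, Matrix.mul_one, Matrix.mul_one, e3, Matrix.mul_one]
    simp only [Matrix.mul_assoc]
  rw [h2, h1, h3, Matrix.trace_sub, Matrix.trace_add, Matrix.trace_mul_comm F, Matrix.mul_assoc _ E,
    e4, Matrix.mul_one]
  ring
end

section
/- Let G be a finite connected strongly symmetric simple graph on n vertices with E ≠ ∅, adjacency matrix Adj and common vertex degree d, and let c = 2/√3. Set Δ₀ := c·(d·I − Adj). Let A be any symmetric n×n real matrix with tr(A) = 0, ∑_{i ≠ j} A_ij = 0, and A_ij = 0 whenever i ≠ j and (i,j) ∉ E. Then for all but finitely many δ > 0, the matrix Δ₀ + δ·I is invertible and tr(A · (Δ₀ + δ·I)⁻¹) = 0. -/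
open Matrix

/-- `alphaNum G s i j` is the number of neighbors `k` of `i` with `dist k j = s`. -/
noncomputable def alphaNum {V : Type*} (G : SimpleGraph V) (s : ℕ) (i j : V) : ℕ :=
  Set.ncard {k : V | G.Adj i k ∧ G.dist k j = s}

/-- A graph is strongly symmetric if `alphaNum G s i j` depends only on `s` and `dist i j`. -/
def StronglySymmetric {V : Type*} (G : SimpleGraph V) : Prop :=
  ∀ (s : ℕ) (i j v w : V), G.dist i j = G.dist v w → alphaNum G s i j = alphaNum G s v w

/-- Matrices whose entries depend only on the graph distance. -/
def distSub {n : ℕ} (G : SimpleGraph (Fin n)) : Submodule ℝ (Matrix (Fin n) (Fin n) ℝ) where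
  carrier := {X | ∃ f : ℕ → ℝ, ∀ i j, X i j = f (G.dist i j)}
  add_mem' := by
    rintro X Y ⟨f, hf⟩ ⟨g, hg⟩
    exact ⟨fun s => f s + g s, fun i j => by simp [hf, hg]⟩
  zero_mem' := ⟨fun _ => 0, fun i j => by simp⟩
  smul_mem' := by
    rintro c X ⟨f, hf⟩
    exact ⟨fun s => c * f s, fun i j => by simp [hf]⟩

lemma adj_mul_mem_distSub {n : ℕ} (G : SimpleGraph (Fin n)) [DecidableRel G.Adj]
    (hsym : StronglySymmetric G) {X : Matrix (Fin n) (Fin n) ℝ} (hX : X ∈ distSub G) :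
    G.adjMatrix ℝ * X ∈ distSub G := by
  obtain ⟨f, hf⟩ := hX
  let T : Finset ℕ := (Finset.univ : Finset (Fin n × Fin n)).image (fun p => G.dist p.1 p.2)
  have key : ∀ i j, (G.adjMatrix ℝ * X) i j = ∑ s ∈ T, (alphaNum G s i j : ℝ) * f s := by
    intro i j
    rw [SimpleGraph.adjMatrix_mul_apply]
    rw [← Finset.sum_fiberwise_of_maps_to (s := G.neighborFinset i) (t := T)
      (g := fun k => G.dist k j)
      (fun k _ => Finset.mem_image.2 ⟨(k, j), Finset.mem_univ _, rfl⟩)]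
    refine Finset.sum_congr rfl fun s _ => ?_
    have h1 : ∀ k ∈ (G.neighborFinset i).filter (fun k => G.dist k j = s), X k j = f s := by
      intro k hk
      rw [hf, (Finset.mem_filter.1 hk).2]
    rw [Finset.sum_congr rfl h1, Finset.sum_const, nsmul_eq_mul]
    congr 2
    rw [alphaNum, ← Set.ncard_coe_finset]
    congr 1
    ext k
    simp
  classical
  refine ⟨fun s => if h : ∃ p : Fin n × Fin n, G.dist p.1 p.2 = s then
    (G.adjMatrix ℝ * X) h.choose.1 h.choose.2 else 0, fun i j => ?_⟩
  have h : ∃ p : Fin n × Fin n, G.dist p.1 p.2 = G.dist i j := ⟨(i, j), rfl⟩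
  beta_reduce
  rw [dif_pos h, key, key]
  refine Finset.sum_congr rfl fun s _ => ?_
  rw [hsym s i j _ _ h.choose_spec.symm]

lemma inv_mem_of_mul_mem {n : ℕ} (P : Submodule ℝ (Matrix (Fin n) (Fin n) ℝ))
    (M : Matrix (Fin n) (Fin n) ℝ) (hM : IsUnit M) (h1 : (1 : Matrix (Fin n) (Fin n) ℝ) ∈ P)
    (hP : ∀ X ∈ P, M * X ∈ P) : M⁻¹ ∈ P := by
  let L : P →ₗ[ℝ] P := (LinearMap.mulLeft ℝ M).restrict hP
  have hinj : Function.Injective L := by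
    intro X Y h
    have h' : M * (X : Matrix (Fin n) (Fin n) ℝ) = M * Y := congrArg Subtype.val h
    exact Subtype.ext (hM.mul_left_cancel h')
  obtain ⟨Y, hY⟩ := LinearMap.injective_iff_surjective.1 hinj ⟨1, h1⟩
  have hY' : M * (Y : Matrix (Fin n) (Fin n) ℝ) = 1 := congrArg Subtype.val hY
  rw [Matrix.inv_eq_right_inv hY']
  exact Y.2

/-- Let `G` be a finite connected strongly symmetric graph on `n` vertices with adjacency matrix
`Adj` and common degree `d`, and let `Δ₀ = (2/√3)·(d·I - Adj)` be the cotan-Laplacian of the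
equilateral triangulation on `G`. For any symmetric trace-free matrix `A` supported on the edges
off the diagonal and whose off-diagonal entries sum to zero, for all but finitely many `δ > 0`
the matrix `Δ₀ + δI` is invertible and `tr(A · (Δ₀ + δI)⁻¹) = 0`. -/
theorem trace_mul_inv_shifted_symmetric_laplacian
    (n : ℕ) (G : SimpleGraph (Fin n)) [DecidableRel G.Adj]
    (hconn : G.Connected) (hE : ∃ a b : Fin n, G.Adj a b)
    (hsym : StronglySymmetric G)
    (d : ℕ) (hd : ∀ i : Fin n, G.degree i = d)
    (Δ₀ : Matrix (Fin n) (Fin n) ℝ)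
    (hΔ : Δ₀ = (2 / Real.sqrt 3) •
      ((d : ℝ) • (1 : Matrix (Fin n) (Fin n) ℝ) - G.adjMatrix ℝ))
    (A : Matrix (Fin n) (Fin n) ℝ)
    (hAsymm : A.IsSymm)
    (hAtr : Matrix.trace A = 0)
    (hAoff : ∑ i : Fin n, ∑ j ∈ Finset.univ.erase i, A i j = 0)
    (hAsupp : ∀ i j : Fin n, i ≠ j → ¬ G.Adj i j → A i j = 0) :
    ∃ S : Finset ℝ, ∀ δ : ℝ, 0 < δ → δ ∉ S →
      IsUnit (Δ₀ + δ • (1 : Matrix (Fin n) (Fin n) ℝ)) ∧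
        Matrix.trace (A * (Δ₀ + δ • (1 : Matrix (Fin n) (Fin n) ℝ))⁻¹) = 0 := by
  refine ⟨∅, fun δ hδ _ => ?_⟩
  have hlap : ((d : ℝ) • (1 : Matrix (Fin n) (Fin n) ℝ) - G.adjMatrix ℝ) = G.lapMatrix ℝ := by
    rw [SimpleGraph.lapMatrix, SimpleGraph.degMatrix]
    congr 1
    ext i j
    simp [Matrix.diagonal_apply, Matrix.one_apply, hd]
  have hunit : IsUnit (Δ₀ + δ • (1 : Matrix (Fin n) (Fin n) ℝ)) := by
    have h1 : Δ₀.PosSemidef := by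
      rw [hΔ, hlap]
      exact (SimpleGraph.posSemidef_lapMatrix ℝ G).smul (by positivity)
    exact (Matrix.PosDef.posSemidef_add h1 (Matrix.PosDef.one.smul hδ)).isUnit
  refine ⟨hunit, ?_⟩
  have hone : (1 : Matrix (Fin n) (Fin n) ℝ) ∈ distSub G := by
    refine ⟨fun s => if s = 0 then 1 else 0, fun i j => ?_⟩
    simp [Matrix.one_apply, hconn.dist_eq_zero_iff]
  have hinv := inv_mem_of_mul_mem (distSub G) _ hunit hone (by
    intro X hX
    rw [hΔ, add_mul, smul_mul_assoc, sub_mul, smul_mul_assoc, smul_mul_assoc, one_mul]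
    exact add_mem (Submodule.smul_mem _ _ (sub_mem (Submodule.smul_mem _ _ hX)
      (adj_mul_mem_distSub G hsym hX))) (Submodule.smul_mem _ _ hX))
  obtain ⟨f, hf⟩ := hinv
  generalize (Δ₀ + δ • (1 : Matrix (Fin n) (Fin n) ℝ))⁻¹ = B at hf
  have hrow : ∀ i, (A * B) i i = A i i * f 0 + (∑ j ∈ Finset.univ.erase i, A i j) * f 1 := by
    intro i
    rw [Matrix.mul_apply, ← Finset.add_sum_erase _ _ (Finset.mem_univ i), hf,
      SimpleGraph.dist_self, Finset.sum_mul]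
    congr 1
    refine Finset.sum_congr rfl fun j hj => ?_
    by_cases hadj : G.Adj i j
    · rw [hf, SimpleGraph.dist_eq_one_iff_adj.2 hadj.symm]
    · rw [hAsupp i j (Finset.ne_of_mem_erase hj).symm hadj]
      simp
  have hAtr' : ∑ i, A i i = 0 := hAtr
  have : Matrix.trace (A * B) = ∑ i, (A * B) i i := rfl
  rw [this, Finset.sum_congr rfl fun i _ => hrow i, Finset.sum_add_distrib, ← Finset.sum_mul,
    ← Finset.sum_mul, hAtr', hAoff]
  simp
end
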